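/- Let n ≥ 1, s > 0, q ∈ [1,∞], and let p, p₁, p₂, r₁, r₂ ∈ [1,∞] satisfy 1/p = 1/p₁ + 1/p₂ = 1/r₁ + 1/r₂, with p < ∞. Then there is a constant C > 0 such that for all Schwartz functions f, g on ℝⁿ, ‖fg‖_{B^s_{p,q}} ≤ C ( ‖f‖_{L^{p₁}} ‖g‖_{B^s_{p₂,q}} + ‖g‖_{L^{r₁}} ‖f‖_{B^s_{r₂,q}} ). -/

import Mathlib

open MeasureTheory Real Filter
open scoped ENNReal FourierTransform

noncomputable section

/-- `ℝⁿ` as a Euclidean space. -/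
abbrev Rn (n : ℕ) : Type := EuclideanSpace ℝ (Fin n)

variable {n : ℕ}

/-- The Fourier transform of a real-valued Schwartz function, viewed as a ℂ-valued function. -/
def ftC (f : SchwartzMap (Rn n) ℝ) : Rn n → ℂ :=
  𝓕 (fun x => (f x : ℂ))

/-- `ψ₀` is a Littlewood–Paley function: an even, radial Schwartz function whose Fourier
transform is nonnegative, supported in the annulus `{ξ : 1/2 < ‖ξ‖ < 2}`, and satisfies
`∑_{j ∈ ℤ} ψ̂₀(2^{-j} ξ) = 1` for `ξ ≠ 0`. -/
structure IsLPF (n : ℕ) (ψ₀ : SchwartzMap (Rn n) ℝ) : Prop where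
  even : ∀ x : Rn n, ψ₀ (-x) = ψ₀ x
  radial : ∀ x y : Rn n, ‖x‖ = ‖y‖ → ψ₀ x = ψ₀ y
  ft_im : ∀ ξ : Rn n, (ftC ψ₀ ξ).im = 0
  ft_nonneg : ∀ ξ : Rn n, 0 ≤ (ftC ψ₀ ξ).re
  ft_supp : ∀ ξ : Rn n, ftC ψ₀ ξ ≠ 0 → 1/2 < ‖ξ‖ ∧ ‖ξ‖ < 2
  ft_sum : ∀ ξ : Rn n, ξ ≠ 0 → HasSum (fun j : ℤ => ftC ψ₀ ((2:ℝ) ^ (-j) • ξ)) 1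

/-- The Littlewood–Paley kernel `ψ_j(x) = 2^{jn} ψ₀(2^j x)`, whose Fourier transform is
`ψ̂₀(2^{-j} ξ)`. -/
def lpKernel (ψ₀ : SchwartzMap (Rn n) ℝ) (j : ℤ) (x : Rn n) : ℝ :=
  (2:ℝ) ^ (j * (n:ℤ)) * ψ₀ ((2:ℝ) ^ j • x)

/-- The Littlewood–Paley projection `Δ_j f = ψ_j ∗ f`. -/
def lpProj (ψ₀ : SchwartzMap (Rn n) ℝ) (j : ℤ) (f : Rn n → ℝ) : Rn n → ℝ :=
  MeasureTheory.convolution (lpKernel ψ₀ j) f (ContinuousLinearMap.mul ℝ ℝ) volume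

/-- `S_j f = ∑_{m ≤ j} Δ_m f`, the low-frequency cutoff; this is the L² function whose
Fourier transform is `(∑_{m ≤ j} ψ̂₀(2^{-m} ξ)) f̂(ξ)`. -/
def lowProj (ψ₀ : SchwartzMap (Rn n) ℝ) (j : ℤ) (f : Rn n → ℝ) (x : Rn n) : ℝ :=
  ∑' m : ℤ, if m ≤ j then lpProj ψ₀ m f x else 0

/-- `Ψ` is the low-frequency piece of the Littlewood–Paley decomposition:
`Ψ̂ = 1 − ∑_{k ≥ 0} ψ̂_k`. -/
def IsLowPiece (ψ₀ Ψ : SchwartzMap (Rn n) ℝ) : Prop :=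
  ∀ ξ : Rn n, ftC Ψ ξ = 1 - ∑' k : ℕ, ftC ψ₀ ((2:ℝ) ^ (-(k:ℤ)) • ξ)

/-- The inhomogeneous Besov norm `‖f‖_{B^s_{p,q}}`, valued in `[0,∞]`:
`‖Ψ∗f‖_{L^p} + (∑_{j ≥ 0} (2^{js} ‖Δ_j f‖_{L^p})^q)^{1/q}`, with the supremum over `j`
replacing the `ℓ^q` sum when `q = ∞`. -/
def besovNorm (ψ₀ Ψ : SchwartzMap (Rn n) ℝ) (s : ℝ) (p q : ℝ≥0∞) (f : Rn n → ℝ) : ℝ≥0∞ :=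
  eLpNorm (MeasureTheory.convolution (fun x => Ψ x) f (ContinuousLinearMap.mul ℝ ℝ) volume)
      p volume +
    (if q = ∞ then
      ⨆ j : ℕ, ENNReal.ofReal ((2:ℝ) ^ ((j:ℝ) * s)) * eLpNorm (lpProj ψ₀ (j:ℤ) f) p volume
    else
      (∑' j : ℕ, (ENNReal.ofReal ((2:ℝ) ^ ((j:ℝ) * s)) *
        eLpNorm (lpProj ψ₀ (j:ℤ) f) p volume) ^ q.toReal) ^ (1 / q.toReal))

/-- The heat semigroup `e^{tΔ} f = h_t ∗ f` with `h_t(x) = (4πt)^{-n/2} e^{-‖x‖²/(4t)}`. -/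
def heatOp (n : ℕ) (t : ℝ) (f : Rn n → ℝ) : Rn n → ℝ :=
  MeasureTheory.convolution
    (fun x : Rn n => (4 * π * t) ^ (-(n:ℝ)/2) * Real.exp (-‖x‖^2 / (4*t))) f
    (ContinuousLinearMap.mul ℝ ℝ) volume

/-- The partial derivative `∂_{x_i} f`. -/
def pderiv' (i : Fin n) (f : Rn n → ℝ) (x : Rn n) : ℝ :=
  fderiv ℝ f x (EuclideanSpace.single i 1)

/-- The Laplacian `Δf = ∑ᵢ ∂²_{x_i} f`. -/
def lapl (f : Rn n → ℝ) (x : Rn n) : ℝ :=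
  ∑ i : Fin n, pderiv' i (pderiv' i f) x


lemma jensen_aux {α : Type*} [MeasurableSpace α] (μ : Measure α) {q : ℝ} (hq : 1 ≤ q)
    (w h : α → ℝ≥0∞) (hw : AEMeasurable w μ) (hh : AEMeasurable h μ) :
    (∫⁻ a, w a * h a ∂μ) ^ q ≤ (∫⁻ a, w a ∂μ) ^ (q - 1) * ∫⁻ a, w a * h a ^ q ∂μ := by
  rcases hq.eq_or_lt with rfl | hq1
  · simp
  have hq0 : 0 < q := by linarith
  have hc : (Real.conjExponent q).HolderConjugate q := (Real.HolderConjugate.conjExponent hq1).symm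
  set r := Real.conjExponent q with hr
  have hr0 : 0 < r := hc.pos
  have hsum : r⁻¹ + q⁻¹ = 1 := hc.inv_add_inv_eq_one
  have H := ENNReal.lintegral_mul_le_Lp_mul_Lq μ hc (f := fun a => w a ^ (r⁻¹))
    (g := fun a => w a ^ (q⁻¹) * h a) (hw.pow_const _) ((hw.pow_const _).mul hh)
  have e1 : ∀ a, ((fun a => w a ^ (r⁻¹)) * fun a => w a ^ (q⁻¹) * h a) a = w a * h a := by
    intro a
    simp only [Pi.mul_apply]
    rw [← mul_assoc, ← ENNReal.rpow_add_of_nonneg _ _ (by positivity) (by positivity), hsum,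
      ENNReal.rpow_one]
  have e2 : ∀ a, (w a ^ (r⁻¹)) ^ r = w a := by
    intro a
    rw [← ENNReal.rpow_mul, inv_mul_cancel₀ hr0.ne', ENNReal.rpow_one]
  have e3 : ∀ a, (w a ^ (q⁻¹) * h a) ^ q = w a * h a ^ q := by
    intro a
    rw [ENNReal.mul_rpow_of_nonneg _ _ hq0.le, ← ENNReal.rpow_mul, inv_mul_cancel₀ hq0.ne',
      ENNReal.rpow_one]
  simp_rw [e1, e2, e3] at H
  calc _ ≤ ((∫⁻ a, w a ∂μ) ^ (1 / r) * (∫⁻ a, w a * h a ^ q ∂μ) ^ (1 / q)) ^ q :=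
        ENNReal.rpow_le_rpow H hq0.le
    _ = _ := by
        rw [ENNReal.mul_rpow_of_nonneg _ _ hq0.le, ← ENNReal.rpow_mul, ← ENNReal.rpow_mul,
          one_div_mul_cancel hq0.ne', ENNReal.rpow_one]
        congr 2
        have : r⁻¹ = 1 - q⁻¹ := by linarith
        rw [one_div, this, sub_mul, inv_mul_cancel₀ hq0.ne', one_mul]

/-- The `ℓ^q` norm. -/
def lq (q : ℝ≥0∞) (c : ℕ → ℝ≥0∞) : ℝ≥0∞ :=
  if q = ∞ then ⨆ j : ℕ, c j else (∑' j : ℕ, c j ^ q.toReal) ^ (1 / q.toReal)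

lemma toReal_one_le {q : ℝ≥0∞} (hq : 1 ≤ q) (h : q ≠ ∞) : 1 ≤ q.toReal := by
  rw [← ENNReal.toReal_one]; exact ENNReal.toReal_mono h hq

lemma lq_mono {q : ℝ≥0∞} {c d : ℕ → ℝ≥0∞} (h : ∀ j, c j ≤ d j) :
    lq q c ≤ lq q d := by
  unfold lq
  split_ifs with hq
  · exact iSup_mono h
  · gcongr
    exact h _

lemma lq_const_mul {q : ℝ≥0∞} (hq : 1 ≤ q) (a : ℝ≥0∞) (c : ℕ → ℝ≥0∞) :
    lq q (fun j => a * c j) = a * lq q c := by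
  unfold lq
  split_ifs with h
  · rw [ENNReal.mul_iSup]
  · have := toReal_one_le hq h
    have h0 : 0 < q.toReal := by linarith
    simp_rw [ENNReal.mul_rpow_of_nonneg _ _ h0.le]
    rw [ENNReal.tsum_mul_left, ENNReal.mul_rpow_of_nonneg _ _ (by positivity), ← ENNReal.rpow_mul,
      mul_one_div_cancel h0.ne', ENNReal.rpow_one]

lemma lq_add_le {q : ℝ≥0∞} (hq : 1 ≤ q) (c d : ℕ → ℝ≥0∞) :
    lq q (fun j => c j + d j) ≤ lq q c + lq q d := by
  unfold lq
  split_ifs with h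
  · exact iSup_le fun j => add_le_add (le_iSup c j) (le_iSup d j)
  · have := toReal_one_le hq h
    have H := ENNReal.lintegral_Lp_add_le (μ := Measure.count) (f := c) (g := d)
      (by fun_prop) (by fun_prop) this
    simpa [lintegral_count] using H

lemma lq_conv {q : ℝ≥0∞} (hq : 1 ≤ q) (w c : ℕ → ℝ≥0∞) :
    lq q (fun k => ∑' i, w i * c (k + i)) ≤ (∑' i, w i) * lq q c := by
  unfold lq
  split_ifs with h
  · refine iSup_le fun k => ?_
    rw [← ENNReal.tsum_mul_right]
    exact ENNReal.tsum_le_tsum fun i => mul_le_mul_right (le_iSup c _) _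
  · have h1 := toReal_one_le hq h
    set r := q.toReal
    have h0 : 0 < r := by linarith
    have J : ∀ k, (∑' i, w i * c (k + i)) ^ r ≤
        (∑' i, w i) ^ (r - 1) * ∑' i, w i * c (k + i) ^ r := by
      intro k
      have H := jensen_aux Measure.count h1 w (fun i => c (k + i)) (by fun_prop) (by fun_prop)
      simpa [lintegral_count] using H
    have S : ∑' k, (∑' i, w i * c (k + i)) ^ r ≤ (∑' i, w i) ^ r * ∑' k, c k ^ r := by
      calc _ ≤ ∑' k, (∑' i, w i) ^ (r - 1) * ∑' i, w i * c (k + i) ^ r :=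
            ENNReal.tsum_le_tsum J
        _ = (∑' i, w i) ^ (r - 1) * ∑' i, w i * ∑' k, c (k + i) ^ r := by
            rw [ENNReal.tsum_mul_left, ENNReal.tsum_comm]
            simp_rw [ENNReal.tsum_mul_left]
        _ ≤ (∑' i, w i) ^ (r - 1) * ∑' i, w i * ∑' k, c k ^ r := by
            refine mul_le_mul_right (ENNReal.tsum_le_tsum fun i => mul_le_mul_right ?_ _) _
            exact ENNReal.tsum_comp_le_tsum_of_injective (add_left_injective i) (fun k => c k ^ r)
        _ = (∑' i, w i) ^ (r - 1) * ((∑' i, w i) ^ (1:ℝ) * ∑' k, c k ^ r) := by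
            rw [ENNReal.tsum_mul_right, ENNReal.rpow_one]
        _ = _ := by
            rw [← mul_assoc, ← ENNReal.rpow_add_of_nonneg _ _ (by linarith) (by linarith)]
            simp
    calc _ ≤ ((∑' i, w i) ^ r * ∑' k, c k ^ r) ^ (1 / r) :=
          ENNReal.rpow_le_rpow S (by positivity)
      _ = _ := by
        rw [ENNReal.mul_rpow_of_nonneg _ _ (by positivity), ← ENNReal.rpow_mul,
          mul_one_div_cancel h0.ne', ENNReal.rpow_one]

lemma le_lq {q : ℝ≥0∞} (hq : 1 ≤ q) (c : ℕ → ℝ≥0∞) (j : ℕ) : c j ≤ lq q c := by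
  unfold lq
  split_ifs with h
  · exact le_iSup c j
  · have h1 := toReal_one_le hq h
    have h0 : 0 < q.toReal := by linarith
    calc c j = (c j ^ q.toReal) ^ (1 / q.toReal) := by
          rw [← ENNReal.rpow_mul, mul_one_div_cancel h0.ne', ENNReal.rpow_one]
      _ ≤ _ := ENNReal.rpow_le_rpow (ENNReal.le_tsum (f := fun j => c j ^ q.toReal) j)
          (by positivity)

/-- shift by two -/
def shift2 (M : ℝ≥0∞) (b : ℕ → ℝ≥0∞) : ℕ → ℝ≥0∞
  | 0 => M
  | 1 => M
  | (m + 2) => b m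

lemma lq_shift2 {q : ℝ≥0∞} (hq : 1 ≤ q) (M : ℝ≥0∞) (b : ℕ → ℝ≥0∞) :
    lq q (shift2 M b) ≤ 2 * M + lq q b := by
  unfold lq
  split_ifs with h
  · refine iSup_le fun j => ?_
    match j with
    | 0 => exact le_add_right (by rw [two_mul]; exact le_add_self)
    | 1 => exact le_add_right (by rw [two_mul]; exact le_add_self)
    | m + 2 => exact le_add_left (le_iSup b m)
  · have h1 := toReal_one_le hq h
    set r := q.toReal
    have h0 : 0 < r := by linarith
    have h2 : 1 / r ≤ 1 := by rw [div_le_one h0]; exact h1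
    have E : ∑' j, shift2 M b j ^ r = M ^ r + (M ^ r + ∑' j, b j ^ r) := by
      rw [tsum_eq_zero_add' ENNReal.summable, tsum_eq_zero_add' ENNReal.summable]
      rfl
    have e : (M ^ r) ^ (1 / r) = M := by
      rw [← ENNReal.rpow_mul, mul_one_div_cancel h0.ne', ENNReal.rpow_one]
    rw [E]
    calc _ ≤ (M ^ r) ^ (1 / r) + (M ^ r + ∑' j, b j ^ r) ^ (1 / r) :=
          ENNReal.rpow_add_le_add_rpow _ _ (by positivity) h2
      _ ≤ (M ^ r) ^ (1 / r) + ((M ^ r) ^ (1 / r) + (∑' j, b j ^ r) ^ (1 / r)) := by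
          gcongr
          exact ENNReal.rpow_add_le_add_rpow _ _ (by positivity) h2
      _ = _ := by rw [e, two_mul, add_assoc]

/-- Young's inequality `L¹ * L^p → L^p`. -/
lemma young_aux {n : ℕ} {p : ℝ≥0∞} (hp : 1 ≤ p)
    (K f : EuclideanSpace ℝ (Fin n) → ℝ) (hK : Continuous K) (hf : Continuous f) :
    eLpNorm (MeasureTheory.convolution K f (ContinuousLinearMap.mul ℝ ℝ) volume) p volume
      ≤ (∫⁻ x, ‖K x‖ₑ) * eLpNorm f p volume := by
  have B : ∀ x, ‖MeasureTheory.convolution K f (ContinuousLinearMap.mul ℝ ℝ) volume x‖ₑ ≤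
      ∫⁻ t, ‖K t‖ₑ * ‖f (x - t)‖ₑ := by
    intro x
    rw [convolution_def]
    refine (enorm_integral_le_lintegral_enorm _).trans_eq ?_
    simp
  by_cases htop : p = ∞
  · subst htop
    simp only [eLpNorm_exponent_top]
    refine essSup_le_of_ae_le _ (Eventually.of_forall fun x => (B x).trans ?_)
    have hae : ∀ᵐ t, ‖f (x - t)‖ₑ ≤ eLpNormEssSup f volume := by
      have := ae_le_eLpNormEssSup (f := f) (μ := volume)
      exact (Measure.measurePreserving_sub_left volume x).quasiMeasurePreserving.ae this
    rw [← lintegral_mul_const _ (by fun_prop)]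
    refine lintegral_mono_ae ?_
    filter_upwards [hae] with t ht
    gcongr
  · have h1 := toReal_one_le hp htop
    have hp0 : p ≠ 0 := (zero_lt_one.trans_le hp).ne'
    rw [eLpNorm_eq_lintegral_rpow_enorm_toReal hp0 htop,
      eLpNorm_eq_lintegral_rpow_enorm_toReal hp0 htop]
    set r := p.toReal
    have h0 : 0 < r := by linarith
    have S : ∫⁻ x, ‖MeasureTheory.convolution K f (ContinuousLinearMap.mul ℝ ℝ) volume x‖ₑ ^ r
        ≤ (∫⁻ x, ‖K x‖ₑ) ^ r * ∫⁻ x, ‖f x‖ₑ ^ r := by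
      calc _ ≤ ∫⁻ x, (∫⁻ t, ‖K t‖ₑ) ^ (r - 1) * ∫⁻ t, ‖K t‖ₑ * ‖f (x - t)‖ₑ ^ r := by
            refine lintegral_mono fun x => ?_
            refine (ENNReal.rpow_le_rpow (B x) h0.le).trans ?_
            exact jensen_aux volume h1 _ _ (by fun_prop) (by fun_prop)
        _ = (∫⁻ t, ‖K t‖ₑ) ^ (r - 1) * ∫⁻ x, ∫⁻ t, ‖K t‖ₑ * ‖f (x - t)‖ₑ ^ r := by
            rw [lintegral_const_mul]
            exact Measurable.lintegral_prod_right (by fun_prop)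
        _ = (∫⁻ t, ‖K t‖ₑ) ^ (r - 1) * ∫⁻ t, ∫⁻ x, ‖K t‖ₑ * ‖f (x - t)‖ₑ ^ r := by
            rw [lintegral_lintegral_swap]
            fun_prop
        _ = (∫⁻ t, ‖K t‖ₑ) ^ (r - 1) * ∫⁻ t, ‖K t‖ₑ * ∫⁻ x, ‖f x‖ₑ ^ r := by
            congr 2
            ext t
            have hm : Measurable fun x => ‖f (x - t)‖ₑ ^ r :=
              (hf.comp (continuous_id.sub continuous_const)).measurable.enorm.pow_const r
            rw [lintegral_const_mul _ hm,
              lintegral_sub_right_eq_self (fun x => ‖f x‖ₑ ^ r) t]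
        _ = (∫⁻ t, ‖K t‖ₑ) ^ (r - 1) * ((∫⁻ t, ‖K t‖ₑ) ^ (1:ℝ) * ∫⁻ x, ‖f x‖ₑ ^ r) := by
            rw [lintegral_mul_const _ (by fun_prop), ENNReal.rpow_one]
        _ = _ := by
            rw [← mul_assoc, ← ENNReal.rpow_add_of_nonneg _ _ (by linarith) (by linarith)]
            simp
    calc _ ≤ ((∫⁻ x, ‖K x‖ₑ) ^ r * ∫⁻ x, ‖f x‖ₑ ^ r) ^ (1 / r) :=
          ENNReal.rpow_le_rpow S (by positivity)
      _ = _ := by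
        rw [ENNReal.mul_rpow_of_nonneg _ _ (by positivity), ← ENNReal.rpow_mul,
          mul_one_div_cancel h0.ne', ENNReal.rpow_one]

open SchwartzMap

/-- complexification -/
def cx (f : SchwartzMap (Rn n) ℝ) : SchwartzMap (Rn n) ℂ :=
  f.postcompCLM (Complex.ofRealCLM)

lemma cx_apply (f : SchwartzMap (Rn n) ℝ) (x : Rn n) : cx f x = (f x : ℂ) := rfl

lemma fourier_cx (f : SchwartzMap (Rn n) ℝ) (ξ : Rn n) : 𝓕 (cx f) ξ = ftC f ξ := rfl

/-- dilation as a Schwartz map -/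
def dil (K : SchwartzMap (Rn n) ℝ) (j : ℤ) : SchwartzMap (Rn n) ℝ :=
  (2:ℝ) ^ (j * (n:ℤ)) • SchwartzMap.compCLMOfContinuousLinearEquiv ℝ
    (ContinuousLinearEquiv.smulLeft (Units.mk0 ((2:ℝ) ^ j) (by positivity))) K

lemma dil_apply (K : SchwartzMap (Rn n) ℝ) (j : ℤ) (x : Rn n) : dil K j x = lpKernel K j x := rfl

lemma dil_coe (K : SchwartzMap (Rn n) ℝ) (j : ℤ) : (dil K j : Rn n → ℝ) = lpKernel K j := rfl

lemma two_zpow_fin (j : ℤ) (n : ℕ) :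
    (2:ℝ) ^ (j * (n:ℤ)) = ((2:ℝ) ^ j) ^ n := by
  rw [zpow_mul, zpow_natCast]

lemma ftC_dil (K : SchwartzMap (Rn n) ℝ) (j : ℤ) (ξ : Rn n) :
    ftC (dil K j) ξ = ftC K ((2:ℝ) ^ (-j) • ξ) := by
  have hpos : (0:ℝ) < 2 ^ j := by positivity
  unfold ftC
  rw [Real.fourier_eq, Real.fourier_eq]
  have := Measure.integral_comp_smul (volume : Measure (Rn n))
    (fun v => 𝐞 (-inner ℝ v ((2:ℝ) ^ (-j) • ξ)) • ((K v : ℝ) : ℂ)) ((2:ℝ) ^ j)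
  have h2 : ∫ v : Rn n, 𝐞 (-inner ℝ v ((2:ℝ) ^ (-j) • ξ)) • ((K v : ℝ) : ℂ) =
      (((2:ℝ) ^ j) ^ n) • ∫ v : Rn n, 𝐞 (-inner ℝ ((2:ℝ) ^ j • v) ((2:ℝ) ^ (-j) • ξ)) •
        ((K ((2:ℝ) ^ j • v) : ℝ) : ℂ) := by
    rw [this, smul_smul]
    simp only [finrank_euclideanSpace, Fintype.card_fin]
    rw [abs_of_pos (by positivity), mul_inv_cancel₀ (by positivity), one_smul]
  rw [h2, ← integral_smul]
  congr 1
  ext v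
  rw [dil_apply, lpKernel, two_zpow_fin, inner_smul_left, inner_smul_right]
  have : (2:ℝ) ^ j * ((2:ℝ) ^ (-j) * inner ℝ v ξ) = inner ℝ v ξ := by
    rw [← mul_assoc, ← zpow_add₀ (by norm_num)]; simp
  simp only [conj_trivial, this]
  rw [Circle.smul_def, Circle.smul_def]
  push_cast
  simp only [smul_eq_mul, Complex.real_smul]
  push_cast
  ring

lemma lintegral_dil (K : SchwartzMap (Rn n) ℝ) (j : ℤ) :
    ∫⁻ x, ‖lpKernel K j x‖ₑ = ∫⁻ x, ‖K x‖ₑ := by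
  have hi : Integrable (lpKernel K j) := (dil K j).integrable
  rw [← ofReal_integral_norm_eq_lintegral_enorm hi,
    ← ofReal_integral_norm_eq_lintegral_enorm (K.integrable)]
  congr 1
  have := Measure.integral_comp_smul (volume : Measure (Rn n)) (fun v => ‖K v‖) ((2:ℝ) ^ j)
  simp only [lpKernel, norm_mul]
  rw [integral_const_mul, this, two_zpow_fin]
  simp only [finrank_euclideanSpace, Fintype.card_fin]
  rw [abs_of_pos (by positivity), smul_eq_mul, ← mul_assoc, Real.norm_of_nonneg (by positivity),
    mul_inv_cancel₀ (by positivity), one_mul]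

lemma fourier_injective {f g : SchwartzMap (Rn n) ℂ} (h : ∀ ξ, 𝓕 f ξ = 𝓕 g ξ) : f = g := by
  have h' : 𝓕 f = 𝓕 g := SchwartzMap.ext h
  rw [← FourierTransform.fourierInv_fourier_eq f (F := SchwartzMap (Rn n) ℂ), h',
    FourierTransform.fourierInv_fourier_eq]

lemma ftC_injective {f g : SchwartzMap (Rn n) ℝ} (h : ∀ ξ, ftC f ξ = ftC g ξ) : f = g := by
  have := fourier_injective (f := cx f) (g := cx g) h
  ext x
  have h2 := congrArg (fun k : SchwartzMap (Rn n) ℂ => k x) this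
  simpa [cx_apply] using h2

/-- convolution of real functions, complexified -/
lemma conv_cx (K : SchwartzMap (Rn n) ℝ) (H : SchwartzMap (Rn n) ℂ) (h : Rn n → ℝ)
    (hH : ∀ x, H x = (h x : ℂ)) (x : Rn n) :
    SchwartzMap.convolution (ContinuousLinearMap.mul ℂ ℂ) (cx K) H x =
      ((MeasureTheory.convolution (fun x => K x) h (ContinuousLinearMap.mul ℝ ℝ) volume x : ℝ) : ℂ) := by
  rw [SchwartzMap.convolution_apply, convolution_def, convolution_def, ← integral_complex_ofReal]
  congr 1
  ext t
  simp [cx_apply, hH]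

/-- band-limited to the ball of radius `b` -/
def BL (b : ℝ) (h : Rn n → ℝ) : Prop :=
  ∃ H : SchwartzMap (Rn n) ℂ, (∀ x, H x = (h x : ℂ)) ∧ ∀ ξ, b ≤ ‖ξ‖ → 𝓕 H ξ = 0

lemma BL_conv (K f : SchwartzMap (Rn n) ℝ) (b : ℝ) (hK : ∀ ξ, b ≤ ‖ξ‖ → ftC K ξ = 0) :
    BL b (MeasureTheory.convolution (fun x => K x) (fun x => f x)
      (ContinuousLinearMap.mul ℝ ℝ) volume) := by
  refine ⟨SchwartzMap.convolution (ContinuousLinearMap.mul ℂ ℂ) (cx K) (cx f), fun x => ?_, fun ξ hξ => ?_⟩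
  · exact conv_cx K (cx f) f (fun x => rfl) x
  · rw [SchwartzMap.fourier_convolution, pairing_apply_apply, fourier_cx, hK ξ hξ]
    simp

lemma BL_continuous {b : ℝ} {h : Rn n → ℝ} (hh : BL b h) : Continuous h := by
  obtain ⟨H, h1, -⟩ := hh
  have : h = fun x => (H x).re := by ext x; simp [h1]
  rw [this]
  exact Complex.continuous_re.comp H.continuous

lemma fourier_mul_zero (u v : SchwartzMap (Rn n) ℂ) (b c : ℝ)
    (hu : ∀ ξ, b ≤ ‖ξ‖ → 𝓕 u ξ = 0) (hv : ∀ ξ, c ≤ ‖ξ‖ → 𝓕 v ξ = 0) (ξ : Rn n)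
    (hξ : b + c ≤ ‖ξ‖) : 𝓕 (pairing (ContinuousLinearMap.mul ℂ ℂ) u v) ξ = 0 := by
  set W := SchwartzMap.convolution (ContinuousLinearMap.mul ℂ ℂ) (𝓕⁻ u) (𝓕⁻ v) with hW
  have h1 : 𝓕 W = pairing (ContinuousLinearMap.mul ℂ ℂ) u v := by
    rw [hW, SchwartzMap.fourier_convolution, FourierTransform.fourier_fourierInv_eq,
      FourierTransform.fourier_fourierInv_eq]
  have neg : ∀ (k : SchwartzMap (Rn n) ℂ) (y : Rn n), 𝓕⁻ k y = 𝓕 k (-y) := by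
    intro k y
    rw [SchwartzMap.fourierInv_coe, SchwartzMap.fourier_coe, Real.fourierInv_eq_fourier_neg]
  have h2 : 𝓕 (pairing (ContinuousLinearMap.mul ℂ ℂ) u v) ξ = W (-ξ) := by
    have := neg (pairing (ContinuousLinearMap.mul ℂ ℂ) u v) (-ξ)
    rw [neg_neg] at this
    rw [← this, ← h1, FourierTransform.fourierInv_fourier_eq]
  rw [h2, hW, SchwartzMap.convolution_apply, convolution_def]
  rw [← integral_zero (Rn n) ℂ (μ := volume)]
  congr 1
  ext t
  rw [neg, neg]
  simp only [ContinuousLinearMap.mul_apply']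
  by_cases h : b ≤ ‖t‖
  · rw [hu (-t) (by simpa using h), zero_mul]
  · rw [hv _ _, mul_zero]
    have : ‖ξ‖ ≤ ‖-(-ξ - t)‖ + ‖t‖ := by
      calc ‖ξ‖ = ‖-(-ξ - t) - t‖ := by congr 1; abel
        _ ≤ _ := norm_sub_le _ _
    push Not at h
    linarith

lemma conv_BL_zero (K : SchwartzMap (Rn n) ℝ) (u v : Rn n → ℝ) (b c : ℝ) (hu : BL b u) (hv : BL c v)
    (hK : ∀ ξ, ‖ξ‖ < b + c → ftC K ξ = 0) :
    MeasureTheory.convolution (fun x => K x) (fun x => u x * v x)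
      (ContinuousLinearMap.mul ℝ ℝ) volume = 0 := by
  obtain ⟨U, hU, hU'⟩ := hu
  obtain ⟨V, hV, hV'⟩ := hv
  have key : SchwartzMap.convolution (ContinuousLinearMap.mul ℂ ℂ) (cx K)
      (pairing (ContinuousLinearMap.mul ℂ ℂ) U V) = 0 := by
    apply fourier_injective
    intro ξ
    rw [SchwartzMap.fourier_convolution, pairing_apply_apply, fourier_cx, FourierTransform.fourier_zero]
    by_cases h : ‖ξ‖ < b + c
    · rw [hK ξ h]; simp
    · rw [fourier_mul_zero U V b c hU' hV' ξ (not_lt.1 h)]; simp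
  ext x
  have := conv_cx K (pairing (ContinuousLinearMap.mul ℂ ℂ) U V) (fun x => u x * v x)
    (fun x => by simp [hU, hV]) x
  rw [key] at this
  simp only [_root_.zero_apply] at this
  exact_mod_cast this.symm

lemma ftC_add (f g : SchwartzMap (Rn n) ℝ) (ξ : Rn n) : ftC (f + g) ξ = ftC f ξ + ftC g ξ := by
  have h : cx (f + g) = cx f + cx g := by unfold cx; exact map_add _ _ _
  rw [← fourier_cx, h, FourierTransform.fourier_add]
  rfl

lemma psi_zero {ψ₀ : SchwartzMap (Rn n) ℝ} (hψ : IsLPF n ψ₀) (ξ : Rn n)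
    (h : ‖ξ‖ ≤ 1/2 ∨ 2 ≤ ‖ξ‖) : ftC ψ₀ ξ = 0 := by
  by_contra hne
  have := hψ.ft_supp ξ hne
  rcases h with h | h <;> linarith [this.1, this.2]

lemma psi_at_zero {ψ₀ : SchwartzMap (Rn n) ℝ} (hψ : IsLPF n ψ₀) : ftC ψ₀ 0 = 0 :=
  psi_zero hψ 0 (by left; simp)

lemma psi_summable {ψ₀ : SchwartzMap (Rn n) ℝ} (hψ : IsLPF n ψ₀) (ξ : Rn n) :
    Summable (fun k : ℕ => ftC ψ₀ ((2:ℝ) ^ (-(k:ℤ)) • ξ)) := by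
  by_cases h : ξ = 0
  · subst h
    simp only [smul_zero, psi_at_zero hψ]
    exact summable_zero
  · exact (hψ.ft_sum ξ h).summable.comp_injective (i := fun k : ℕ => (k : ℤ)) Nat.cast_injective

lemma low_zero {ψ₀ Ψ : SchwartzMap (Rn n) ℝ} (hψ : IsLPF n ψ₀) (hΨ : IsLowPiece ψ₀ Ψ) (ξ : Rn n)
    (h : 1 ≤ ‖ξ‖) : ftC Ψ ξ = 0 := by
  have h0 : ξ ≠ 0 := by rintro rfl; simp at h; linarith
  have hs := hψ.ft_sum ξ h0
  have h1 : ∑' k : ℕ, ftC ψ₀ ((2:ℝ) ^ (-(k:ℤ)) • ξ) = 1 := by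
    have hz : ∀ j : ℤ, j ∉ Set.range (fun k : ℕ => (k : ℤ)) →
        ftC ψ₀ ((2:ℝ) ^ (-j) • ξ) = 0 := by
      intro j hj
      have hj' : j < 0 := by
        by_contra hc
        exact hj ⟨j.toNat, by simp; omega⟩
      refine psi_zero hψ _ (Or.inr ?_)
      rw [norm_smul, Real.norm_of_nonneg (by positivity)]
      have : (2:ℝ) ^ (1:ℤ) ≤ 2 ^ (-j) := zpow_le_zpow_right₀ (by norm_num) (by omega)
      rw [zpow_one] at this
      nlinarith
    have := (Function.Injective.hasSum_iff (g := fun k : ℕ => (k : ℤ)) Nat.cast_injective hz).2 hs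
    exact this.tsum_eq
  rw [hΨ ξ, h1, sub_self]

lemma low_at_zero {ψ₀ Ψ : SchwartzMap (Rn n) ℝ} (hψ : IsLPF n ψ₀) (hΨ : IsLowPiece ψ₀ Ψ) :
    ∫ x, Ψ x = 1 := by
  have h := hΨ 0
  simp only [smul_zero, psi_at_zero hψ, tsum_zero, sub_zero] at h
  unfold ftC at h
  rw [Real.fourier_eq] at h
  simp only [inner_zero_right, neg_zero, AddChar.map_zero_eq_one, one_smul] at h
  rw [integral_complex_ofReal] at h
  exact_mod_cast h

lemma low_step {ψ₀ Ψ : SchwartzMap (Rn n) ℝ} (hψ : IsLPF n ψ₀) (hΨ : IsLowPiece ψ₀ Ψ) (ξ : Rn n) :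
    ftC Ψ ((2:ℝ) ^ (-1:ℤ) • ξ) = ftC Ψ ξ + ftC ψ₀ ξ := by
  rw [hΨ, hΨ, (psi_summable hψ ξ).tsum_eq_zero_add]
  have : ∀ k : ℕ, (2:ℝ) ^ (-(k:ℤ)) • ((2:ℝ) ^ (-1:ℤ) • ξ) = (2:ℝ) ^ (-((k + 1 : ℕ):ℤ)) • ξ := by
    intro k
    rw [smul_smul, ← zpow_add₀ (by norm_num)]
    congr 2
    push_cast; ring
  simp_rw [this]
  simp
  ring

lemma dil_step {ψ₀ Ψ : SchwartzMap (Rn n) ℝ} (hψ : IsLPF n ψ₀) (hΨ : IsLowPiece ψ₀ Ψ) (j : ℤ) :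
    dil Ψ (j + 1) = dil Ψ j + dil ψ₀ j := by
  apply ftC_injective
  intro ξ
  rw [ftC_add, ftC_dil, ftC_dil, ftC_dil, ← low_step hψ hΨ, smul_smul, ← zpow_add₀ (by norm_num)]
  congr 3
  ring

/-- continuous and bounded -/
def CB (h : Rn n → ℝ) : Prop := Continuous h ∧ ∃ C : ℝ, ∀ x, ‖h x‖ ≤ C

lemma CB_schwartz (f : SchwartzMap (Rn n) ℝ) : CB (fun x => f x) :=
  ⟨f.continuous, _, norm_le_seminorm ℝ f⟩

lemma CB_mul {u v : Rn n → ℝ} (hu : CB u) (hv : CB v) : CB (fun x => u x * v x) := by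
  obtain ⟨hu, C, hC⟩ := hu
  obtain ⟨hv, D, hD⟩ := hv
  refine ⟨hu.mul hv, C * D, fun x => ?_⟩
  rw [norm_mul]
  exact mul_le_mul (hC x) (hD x) (norm_nonneg _) ((norm_nonneg _).trans (hC x))

lemma CB_add {u v : Rn n → ℝ} (hu : CB u) (hv : CB v) : CB (fun x => u x + v x) := by
  obtain ⟨hu, C, hC⟩ := hu
  obtain ⟨hv, D, hD⟩ := hv
  exact ⟨hu.add hv, C + D, fun x => (norm_add_le _ _).trans (add_le_add (hC x) (hD x))⟩

lemma conv_integrable (K : SchwartzMap (Rn n) ℝ) (j : ℤ) {h : Rn n → ℝ} (hh : CB h) (x : Rn n) :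
    Integrable (fun t => lpKernel K j t * h (x - t)) := by
  obtain ⟨hc, C, hC⟩ := hh
  have hi : Integrable (lpKernel K j) := (dil K j).integrable
  refine hi.mul_bdd (c := C) ?_ (Eventually.of_forall fun t => hC _)
  exact (hc.comp (continuous_const.sub continuous_id)).aestronglyMeasurable

lemma lpProj_apply (K : SchwartzMap (Rn n) ℝ) (j : ℤ) (h : Rn n → ℝ) (x : Rn n) :
    lpProj K j h x = ∫ t, lpKernel K j t * h (x - t) := rfl

lemma lpProj_add (K : SchwartzMap (Rn n) ℝ) (j : ℤ) {u v : Rn n → ℝ} (hu : CB u) (hv : CB v) :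
    lpProj K j (fun x => u x + v x) = lpProj K j u + lpProj K j v := by
  ext x
  rw [Pi.add_apply, lpProj_apply, lpProj_apply, lpProj_apply,
    ← integral_add (conv_integrable K j hu x) (conv_integrable K j hv x)]
  congr 1; ext t; ring

lemma lpProj_step {ψ₀ Ψ : SchwartzMap (Rn n) ℝ} (hψ : IsLPF n ψ₀) (hΨ : IsLowPiece ψ₀ Ψ) (j : ℤ)
    {h : Rn n → ℝ} (hh : CB h) (x : Rn n) :
    lpProj Ψ (j + 1) h x = lpProj Ψ j h x + lpProj ψ₀ j h x := by
  rw [lpProj_apply, lpProj_apply, lpProj_apply,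
    ← integral_add (conv_integrable Ψ j hh x) (conv_integrable ψ₀ j hh x)]
  congr 1; ext t
  rw [← add_mul, ← dil_apply, dil_step hψ hΨ]
  rfl

lemma lpKernel_continuous (K : SchwartzMap (Rn n) ℝ) (j : ℤ) : Continuous (lpKernel K j) :=
  (dil K j).continuous

lemma lpKernel_integrable (K : SchwartzMap (Rn n) ℝ) (j : ℤ) : Integrable (lpKernel K j) :=
  (dil K j).integrable

lemma lpProj_young {p : ℝ≥0∞} (hp : 1 ≤ p) (K : SchwartzMap (Rn n) ℝ) (j : ℤ) {h : Rn n → ℝ}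
    (hh : Continuous h) :
    eLpNorm (lpProj K j h) p volume ≤ (∫⁻ x, ‖K x‖ₑ) * eLpNorm h p volume := by
  rw [← lintegral_dil K j]
  exact young_aux hp _ _ (lpKernel_continuous K j) hh

lemma lpProj_eq_comp (K : SchwartzMap (Rn n) ℝ) (j : ℤ) (h : Rn n → ℝ) (x : Rn n) :
    lpProj K j h x = ∫ t, K t * h (x - (2:ℝ) ^ (-j) • t) := by
  have := Measure.integral_comp_smul (volume : Measure (Rn n))
    (fun t => K t * h (x - (2:ℝ) ^ (-j) • t)) ((2:ℝ) ^ j)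
  simp only [smul_smul, ← zpow_add₀ (show (2:ℝ) ≠ 0 by norm_num), neg_add_cancel, zpow_zero,
    one_smul, finrank_euclideanSpace, Fintype.card_fin] at this
  rw [lpProj_apply]
  simp only [lpKernel, mul_assoc]
  rw [integral_const_mul, this, two_zpow_fin, abs_of_pos (by positivity), smul_eq_mul, ← mul_assoc,
    mul_inv_cancel₀ (by positivity), one_mul]

lemma lpProj_bound (K : SchwartzMap (Rn n) ℝ) (j : ℤ) {h : Rn n → ℝ} {C : ℝ}
    (hC : ∀ x, ‖h x‖ ≤ C) (x : Rn n) : ‖lpProj K j h x‖ ≤ (∫ t, ‖K t‖) * C := by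
  rw [lpProj_eq_comp, ← integral_mul_const]
  refine norm_integral_le_of_norm_le (K.integrable.norm.mul_const C)
    (Eventually.of_forall fun t => ?_)
  rw [norm_mul]
  exact mul_le_mul_of_nonneg_left (hC _) (norm_nonneg _)

lemma lpProj_tendsto {ψ₀ Ψ : SchwartzMap (Rn n) ℝ} (hψ : IsLPF n ψ₀) (hΨ : IsLowPiece ψ₀ Ψ)
    {h : Rn n → ℝ} (hh : CB h) (x : Rn n) :
    Tendsto (fun J : ℕ => lpProj Ψ (J:ℤ) h x) atTop (nhds (h x)) := by
  obtain ⟨hc, C, hC⟩ := hh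
  simp_rw [lpProj_eq_comp]
  have e : h x = ∫ t, Ψ t * h x := by
    rw [integral_mul_const, low_at_zero hψ hΨ, one_mul]
  rw [e]
  refine tendsto_integral_of_dominated_convergence (fun t => ‖Ψ t‖ * C) (fun J => ?_)
    (Ψ.integrable.norm.mul_const C) (fun J => Eventually.of_forall fun t => ?_)
    (Eventually.of_forall fun t => ?_)
  · refine (Ψ.continuous.mul (hc.comp ?_)).aestronglyMeasurable
    fun_prop
  · rw [norm_mul]
    exact mul_le_mul_of_nonneg_left (hC _) (norm_nonneg _)
  · refine Tendsto.const_mul _ ?_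
    have h1 : Tendsto (fun J : ℕ => (2:ℝ) ^ (-(J:ℤ))) atTop (nhds 0) := by
      simp only [zpow_neg, zpow_natCast, ← inv_pow]
      exact tendsto_pow_atTop_nhds_zero_of_lt_one (by norm_num) (by norm_num)
    have h2 : Tendsto (fun J : ℕ => x - (2:ℝ) ^ (-(J:ℤ)) • t) atTop (nhds (x - (0:ℝ) • t)) :=
      tendsto_const_nhds.sub (h1.smul_const t)
    rw [zero_smul, sub_zero] at h2
    exact (hc.tendsto x).comp h2

lemma BL_lpProj (K f : SchwartzMap (Rn n) ℝ) (j : ℤ) (b : ℝ)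
    (hK : ∀ ξ, b ≤ ‖ξ‖ → ftC K ξ = 0) : BL ((2:ℝ) ^ j * b) (lpProj K j (fun x => f x)) := by
  refine BL_conv (dil K j) f _ fun ξ hξ => ?_
  rw [ftC_dil]
  apply hK
  rw [norm_smul, Real.norm_of_nonneg (by positivity), zpow_neg, ← div_eq_inv_mul,
    le_div_iff₀ (by positivity)]
  linarith

lemma CB_lpProj (K f : SchwartzMap (Rn n) ℝ) (j : ℤ) : CB (lpProj K j (fun x => f x)) := by
  refine ⟨?_, _, lpProj_bound K j (norm_le_seminorm ℝ f)⟩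
  have h := SchwartzMap.continuous
    (SchwartzMap.convolution (ContinuousLinearMap.mul ℂ ℂ) (cx (dil K j)) (cx f))
  have e : lpProj K j (fun x => f x) = fun x =>
      (SchwartzMap.convolution (ContinuousLinearMap.mul ℂ ℂ) (cx (dil K j)) (cx f) x).re := by
    ext x
    rw [conv_cx (dil K j) (cx f) f (fun x => rfl) x, Complex.ofReal_re]
    rfl
  rw [e]
  exact Complex.continuous_re.comp h

lemma lpProj_BL_zero {ψ₀ : SchwartzMap (Rn n) ℝ} (hψ : IsLPF n ψ₀) {u v : Rn n → ℝ} {b c : ℝ}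
    (hu : BL b u) (hv : BL c v) (k : ℤ) (hk : b + c ≤ (2:ℝ) ^ k * (1/2)) :
    lpProj ψ₀ k (fun x => u x * v x) = 0 := by
  refine conv_BL_zero (dil ψ₀ k) u v b c hu hv fun ξ hξ => ?_
  rw [ftC_dil]
  refine psi_zero hψ _ (Or.inl ?_)
  rw [norm_smul, Real.norm_of_nonneg (by positivity), zpow_neg, ← div_eq_inv_mul,
    div_le_iff₀ (by positivity)]
  linarith

lemma holder_aux {p a b : ℝ≥0∞} (h : 1 / p = 1 / a + 1 / b) {u v : Rn n → ℝ} (hu : Continuous u)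
    (hv : Continuous v) : eLpNorm (fun x => u x * v x) p volume ≤
      eLpNorm u a volume * eLpNorm v b volume := by
  have : ENNReal.HolderTriple a b p := ⟨by simpa using h.symm⟩
  exact eLpNorm_smul_le_mul_eLpNorm (f := v) (φ := u) hv.aestronglyMeasurable hu.aestronglyMeasurable

lemma fatou_aux {p : ℝ≥0∞} {F : ℕ → Rn n → ℝ} {G : Rn n → ℝ} {B : ℝ≥0∞}
    (hF : ∀ J, AEStronglyMeasurable (F J) volume)
    (hlim : ∀ x, Tendsto (fun J => F J x) atTop (nhds (G x)))
    (hB : ∀ J, eLpNorm (F J) p volume ≤ B) : eLpNorm G p volume ≤ B := by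
  refine (Lp.eLpNorm_lim_le_liminf_eLpNorm hF G (Eventually.of_forall hlim)).trans ?_
  refine liminf_le_of_le (by isBoundedDefault) fun b hb => ?_
  obtain ⟨J, hJ⟩ := hb.exists
  exact hJ.trans (hB J)

lemma lpProj_aesm (K : SchwartzMap (Rn n) ℝ) (j : ℤ) {h : Rn n → ℝ} (hh : CB h) :
    AEStronglyMeasurable (lpProj K j h) volume := by
  have hc : Continuous (lpProj K j h) := by
    obtain ⟨hc, C, hC⟩ := hh
    refine BddAbove.continuous_convolution_right_of_integrable _ ?_ (lpKernel_integrable K j) hc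
    exact ⟨C, by rintro _ ⟨y, rfl⟩; exact hC y⟩
  exact hc.aestronglyMeasurable

lemma lpProj_mul_tendsto {ψ₀ Ψ : SchwartzMap (Rn n) ℝ} (hψ : IsLPF n ψ₀) (hΨ : IsLowPiece ψ₀ Ψ)
    (f g : SchwartzMap (Rn n) ℝ) (k : ℤ) (x : Rn n) :
    Tendsto (fun J : ℕ => lpProj ψ₀ k (fun y => lpProj Ψ (J:ℤ) (fun x => f x) y *
      lpProj Ψ (J:ℤ) (fun x => g x) y) x) atTop (nhds (lpProj ψ₀ k (fun y => f y * g y) x)) := by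
  simp_rw [lpProj_apply ψ₀ k]
  have hf := norm_le_seminorm ℝ f
  have hg := norm_le_seminorm ℝ g
  set Cf := SchwartzMap.seminorm ℝ 0 0 f
  set Cg := SchwartzMap.seminorm ℝ 0 0 g
  refine tendsto_integral_of_dominated_convergence
    (fun t => ‖lpKernel ψ₀ k t‖ * (((∫ t, ‖Ψ t‖) * Cf) * ((∫ t, ‖Ψ t‖) * Cg))) (fun J => ?_)
    ((lpKernel_integrable ψ₀ k).norm.mul_const _) (fun J => Eventually.of_forall fun t => ?_)
    (Eventually.of_forall fun t => ?_)
  · exact (conv_integrable ψ₀ k (CB_mul (CB_lpProj Ψ f J) (CB_lpProj Ψ g J)) x).aestronglyMeasurable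
  · rw [norm_mul, norm_mul]
    have h1 := lpProj_bound Ψ (J:ℤ) hf (x - t)
    have h2 := lpProj_bound Ψ (J:ℤ) hg (x - t)
    exact mul_le_mul_of_nonneg_left (mul_le_mul h1 h2 (norm_nonneg _) ((norm_nonneg _).trans h1))
      (norm_nonneg _)
  · exact ((lpProj_tendsto hψ hΨ (CB_schwartz f) _).mul
      (lpProj_tendsto hψ hΨ (CB_schwartz g) _)).const_mul _

lemma piece_bound {ψ₀ : SchwartzMap (Rn n) ℝ} {p a b : ℝ≥0∞} (hp : 1 ≤ p)
    (h : 1 / p = 1 / a + 1 / b) {u v : Rn n → ℝ} (hu : CB u) (hv : CB v) (k : ℤ)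
    {X Y : ℝ≥0∞} (hX : eLpNorm u a volume ≤ X) (hY : eLpNorm v b volume ≤ Y) :
    eLpNorm (lpProj ψ₀ k (fun x => u x * v x)) p volume ≤ (∫⁻ x, ‖ψ₀ x‖ₑ) * (X * Y) := by
  refine (lpProj_young hp ψ₀ k (CB_mul hu hv).1).trans ?_
  refine mul_le_mul_right ((holder_aux h hu.1 hv.1).trans ?_) _
  exact mul_le_mul' hX hY

lemma main_bound {ψ₀ Ψ : SchwartzMap (Rn n) ℝ} (hψ : IsLPF n ψ₀) (hΨ : IsLowPiece ψ₀ Ψ)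
    {p p₁ p₂ r₁ r₂ : ℝ≥0∞} (hp : 1 ≤ p) (hp₁ : 1 ≤ p₁) (hr₁ : 1 ≤ r₁)
    (hpp : 1 / p = 1 / p₁ + 1 / p₂) (hpr : 1 / p = 1 / r₁ + 1 / r₂)
    (f g : SchwartzMap (Rn n) ℝ) (k J : ℕ) :
    eLpNorm (lpProj ψ₀ (k:ℤ) (fun y => lpProj Ψ (J:ℤ) (fun x => f x) y *
      lpProj Ψ (J:ℤ) (fun x => g x) y)) p volume ≤
      ((∫⁻ x, ‖ψ₀ x‖ₑ) * (∫⁻ x, ‖Ψ x‖ₑ)) * ∑ m ∈ Finset.range (J + 2), if k ≤ m then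
        shift2 (eLpNorm (fun x => f x) p₁ volume * eLpNorm (lpProj Ψ 0 (fun x => g x)) p₂ volume)
          (fun j => eLpNorm (fun x => g x) r₁ volume *
              eLpNorm (lpProj ψ₀ (j:ℤ) (fun x => f x)) r₂ volume +
            eLpNorm (fun x => f x) p₁ volume *
              eLpNorm (lpProj ψ₀ (j:ℤ) (fun x => g x)) p₂ volume) m else 0 := by
  have hlow : ∀ ξ, (1:ℝ) ≤ ‖ξ‖ → ftC Ψ ξ = 0 := low_zero hψ hΨ
  have hps : ∀ ξ, (2:ℝ) ≤ ‖ξ‖ → ftC ψ₀ ξ = 0 := fun ξ h => psi_zero hψ ξ (Or.inr h)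
  set N0 := ∫⁻ x, ‖ψ₀ x‖ₑ
  set N1 := ∫⁻ x, ‖Ψ x‖ₑ
  set d := shift2 (eLpNorm (fun x => f x) p₁ volume * eLpNorm (lpProj Ψ 0 (fun x => g x)) p₂ volume)
          (fun j => eLpNorm (fun x => g x) r₁ volume *
              eLpNorm (lpProj ψ₀ (j:ℤ) (fun x => f x)) r₂ volume +
            eLpNorm (fun x => f x) p₁ volume *
              eLpNorm (lpProj ψ₀ (j:ℤ) (fun x => g x)) p₂ volume) with hd
  induction J with
  | zero =>
    by_cases hk : k ≤ 1
    · have h1 : d 1 ≤ ∑ m ∈ Finset.range (0 + 2), if k ≤ m then d m else 0 := by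
        rw [Finset.sum_range_succ, if_pos hk]
        exact le_add_self
      refine le_trans ?_ (mul_le_mul_right h1 _)
      have := piece_bound (ψ₀ := ψ₀) hp hpp (CB_lpProj Ψ f ((0:ℕ):ℤ)) (CB_lpProj Ψ g ((0:ℕ):ℤ)) k
        (lpProj_young hp₁ Ψ ((0:ℕ):ℤ) f.continuous) le_rfl
      refine this.trans_eq ?_
      simp only [hd, shift2, Nat.cast_zero]
      simp only [N0, N1]
      ring
    · have := lpProj_BL_zero hψ (BL_lpProj Ψ f ((0:ℕ):ℤ) 1 hlow) (BL_lpProj Ψ g ((0:ℕ):ℤ) 1 hlow) k (by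
        have : (2:ℝ) ^ (2:ℤ) ≤ 2 ^ (k:ℤ) := zpow_le_zpow_right₀ (by norm_num) (by omega)
        norm_num at this ⊢
        linarith)
      rw [this, eLpNorm_zero]
      exact zero_le
  | succ J ih =>
    have hcf := CB_lpProj Ψ f (J:ℤ)
    have hcg := CB_lpProj Ψ g (J:ℤ)
    have hcg' := CB_lpProj Ψ g ((J:ℤ) + 1)
    have hdf := CB_lpProj ψ₀ f (J:ℤ)
    have hdg := CB_lpProj ψ₀ g (J:ℤ)
    have split : (fun y => lpProj Ψ ((J+1:ℕ):ℤ) (fun x => f x) y *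
        lpProj Ψ ((J+1:ℕ):ℤ) (fun x => g x) y) =
        fun y => (lpProj Ψ (J:ℤ) (fun x => f x) y * lpProj Ψ (J:ℤ) (fun x => g x) y) +
          ((lpProj Ψ ((J:ℤ)+1) (fun x => g x) y * lpProj ψ₀ (J:ℤ) (fun x => f x) y) +
            (lpProj Ψ (J:ℤ) (fun x => f x) y * lpProj ψ₀ (J:ℤ) (fun x => g x) y)) := by
      ext y
      push_cast
      rw [lpProj_step hψ hΨ _ (CB_schwartz f), lpProj_step hψ hΨ _ (CB_schwartz g)]
      ring
    rw [split, lpProj_add _ _ (CB_mul hcf hcg) (CB_add (CB_mul hcg' hdf) (CB_mul hcf hdg))]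
    refine (eLpNorm_add_le (lpProj_aesm _ _ (CB_mul hcf hcg))
      (lpProj_aesm _ _ (CB_add (CB_mul hcg' hdf) (CB_mul hcf hdg))) hp).trans ?_
    rw [show J + 1 + 2 = (J + 2) + 1 by ring, Finset.sum_range_succ, mul_add]
    refine add_le_add ih ?_
    rw [lpProj_add _ _ (CB_mul hcg' hdf) (CB_mul hcf hdg)]
    split_ifs with hk
    · refine (eLpNorm_add_le (lpProj_aesm _ _ (CB_mul hcg' hdf))
        (lpProj_aesm _ _ (CB_mul hcf hdg)) hp).trans ?_
      have e1 := piece_bound (ψ₀ := ψ₀) hp hpr hcg' hdf k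
        (lpProj_young hr₁ Ψ ((J:ℤ)+1) g.continuous) le_rfl
      have e2 := piece_bound (ψ₀ := ψ₀) hp hpp hcf hdg k
        (lpProj_young hp₁ Ψ (J:ℤ) f.continuous) le_rfl
      refine (add_le_add e1 e2).trans_eq ?_
      simp only [hd, shift2]
      simp only [N0, N1]
      ring
    · have hJ : (2:ℝ) ^ ((J:ℤ) + 3) ≤ 2 ^ (k:ℤ) := zpow_le_zpow_right₀ (by norm_num) (by omega)
      have hpos : (0:ℝ) < 2 ^ J := by positivity
      rw [zpow_add₀ (by norm_num)] at hJ
      norm_num at hJ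
      have z1 := lpProj_BL_zero hψ (BL_lpProj Ψ g ((J:ℤ)+1) 1 hlow) (BL_lpProj ψ₀ f (J:ℤ) 2 hps) k (by
        rw [zpow_add₀ (by norm_num)]
        norm_num
        linarith)
      have z2 := lpProj_BL_zero hψ (BL_lpProj Ψ f (J:ℤ) 1 hlow) (BL_lpProj ψ₀ g (J:ℤ) 2 hps) k (by
        norm_num
        linarith)
      rw [z1, z2]
      simp

/-- the weights `2^{js}` -/
def wt (s : ℝ) (j : ℕ) : ℝ≥0∞ := ENNReal.ofReal ((2:ℝ) ^ ((j:ℝ) * s))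

lemma wt_add (s : ℝ) (i j : ℕ) : wt s (i + j) = wt s i * wt s j := by
  unfold wt
  rw [← ENNReal.ofReal_mul (by positivity), ← Real.rpow_add (by norm_num)]
  congr 2; push_cast; ring

lemma wt_neg_mul (s : ℝ) (j : ℕ) : wt (-s) j * wt s j = 1 := by
  unfold wt
  rw [← ENNReal.ofReal_mul (by positivity), ← Real.rpow_add (by norm_num)]
  simp

lemma wt_mono {s : ℝ} (hs : 0 < s) {i j : ℕ} (h : i ≤ j) : wt s i ≤ wt s j := by
  unfold wt
  refine ENNReal.ofReal_le_ofReal (Real.rpow_le_rpow_of_exponent_le (by norm_num) ?_)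
  gcongr

lemma wt_sum {s : ℝ} (hs : 0 < s) : ∑' j, wt (-s) j ≠ ∞ := by
  have h : ∀ j, wt (-s) j = ENNReal.ofReal (((2:ℝ) ^ (-s)) ^ j) := by
    intro j
    unfold wt
    rw [← Real.rpow_natCast, ← Real.rpow_mul (by norm_num), mul_comm]
  simp_rw [h]
  have : Summable fun j : ℕ => ((2:ℝ) ^ (-s)) ^ j :=
    summable_geometric_of_lt_one (by positivity)
      (Real.rpow_lt_one_of_one_lt_of_neg (by norm_num) (by linarith))
  exact this.tsum_ofReal_ne_top

lemma besov_eq (ψ₀ Ψ : SchwartzMap (Rn n) ℝ) (s : ℝ) (p q : ℝ≥0∞) (f : Rn n → ℝ) :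
    besovNorm ψ₀ Ψ s p q f = eLpNorm (lpProj Ψ 0 f) p volume +
      lq q (fun j => wt s j * eLpNorm (lpProj ψ₀ (j:ℤ) f) p volume) := by
  have : lpProj Ψ 0 f = MeasureTheory.convolution (fun x => Ψ x) f
      (ContinuousLinearMap.mul ℝ ℝ) volume := by
    unfold lpProj
    congr 1
    ext x
    simp [lpKernel]
  rw [this]
  rfl

lemma lp_le_besov {ψ₀ Ψ : SchwartzMap (Rn n) ℝ} (hψ : IsLPF n ψ₀) (hΨ : IsLowPiece ψ₀ Ψ)
    {s : ℝ} {p q : ℝ≥0∞} (hp : 1 ≤ p) (hq : 1 ≤ q) (g : SchwartzMap (Rn n) ℝ) :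
    eLpNorm (fun x => g x) p volume ≤
      (1 + ∑' j, wt (-s) j) * besovNorm ψ₀ Ψ s p q (fun x => g x) := by
  have step : ∀ J : ℕ, eLpNorm (lpProj Ψ (J:ℤ) (fun x => g x)) p volume ≤
      eLpNorm (lpProj Ψ 0 (fun x => g x)) p volume +
        ∑ j ∈ Finset.range J, eLpNorm (lpProj ψ₀ (j:ℤ) (fun x => g x)) p volume := by
    intro J
    induction J with
    | zero => simp
    | succ J ih =>
      have : lpProj Ψ ((J+1:ℕ):ℤ) (fun x => g x) =
          lpProj Ψ (J:ℤ) (fun x => g x) + lpProj ψ₀ (J:ℤ) (fun x => g x) := by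
        ext x
        push_cast
        exact lpProj_step hψ hΨ _ (CB_schwartz g) x
      rw [this, Finset.sum_range_succ, ← add_assoc]
      exact (eLpNorm_add_le (lpProj_aesm _ _ (CB_schwartz g)) (lpProj_aesm _ _ (CB_schwartz g))
        hp).trans (add_le_add_left ih _)
  refine fatou_aux (F := fun J : ℕ => lpProj Ψ (J:ℤ) (fun x => g x))
    (fun J => lpProj_aesm _ _ (CB_schwartz g)) (lpProj_tendsto hψ hΨ (CB_schwartz g))
    (fun J => (step J).trans ?_)
  rw [besov_eq]
  set L := lq q (fun j => wt s j * eLpNorm (lpProj ψ₀ (j:ℤ) (fun x => g x)) p volume)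
  set P := eLpNorm (lpProj Ψ 0 (fun x => g x)) p volume
  have h1 : ∑ j ∈ Finset.range J, eLpNorm (lpProj ψ₀ (j:ℤ) (fun x => g x)) p volume ≤
      (∑' j, wt (-s) j) * L := by
    refine (ENNReal.sum_le_tsum _).trans ?_
    rw [← ENNReal.tsum_mul_right]
    refine ENNReal.tsum_le_tsum fun j => ?_
    calc eLpNorm (lpProj ψ₀ (j:ℤ) (fun x => g x)) p volume
        = wt (-s) j * (wt s j * eLpNorm (lpProj ψ₀ (j:ℤ) (fun x => g x)) p volume) := by
          rw [← mul_assoc, wt_neg_mul, one_mul]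
      _ ≤ _ := mul_le_mul_right (le_lq hq
        (fun j => wt s j * eLpNorm (lpProj ψ₀ (j:ℤ) (fun x => g x)) p volume) j) _
  calc P + _ ≤ 1 * (P + L) + (∑' j, wt (-s) j) * (P + L) := by
        refine add_le_add ?_ (h1.trans (mul_le_mul_right le_add_self _))
        rw [one_mul]; exact le_self_add
    _ = _ := by rw [add_mul]

lemma tail_sum (d : ℕ → ℝ≥0∞) (k N : ℕ) :
    ∑ m ∈ Finset.range N, (if k ≤ m then d m else 0) ≤ ∑' i, d (k + i) := by
  refine (ENNReal.sum_le_tsum _).trans ?_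
  rw [← Summable.sum_add_tsum_nat_add' (k := k) ENNReal.summable, Finset.sum_eq_zero, zero_add]
  · refine ENNReal.tsum_le_tsum fun i => ?_
    rw [if_pos (by omega), add_comm]
  · intro i hi
    rw [if_neg (by simpa using hi)]

lemma wt_shift {s : ℝ} (hs : 0 < s) (M : ℝ≥0∞) (a : ℕ → ℝ≥0∞) (m : ℕ) :
    wt s m * shift2 M a m ≤ wt s 2 * shift2 M (fun j => wt s j * a j) m := by
  match m with
  | 0 => exact mul_le_mul_left (wt_mono hs (by norm_num)) _
  | 1 => exact mul_le_mul_left (wt_mono hs (by norm_num)) _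
  | j + 2 =>
    simp only [shift2]
    rw [wt_add, ← mul_assoc, mul_comm (wt s j)]

lemma besov_leibniz_aux {ψ₀ Ψ : SchwartzMap (Rn n) ℝ}
    (hψ : IsLPF n ψ₀) (hΨ : IsLowPiece ψ₀ Ψ)
    {s : ℝ} (hs : 0 < s) {q : ℝ≥0∞} (hq : 1 ≤ q)
    {p p₁ p₂ r₁ r₂ : ℝ≥0∞} (hp : 1 ≤ p)
    (hp₁ : 1 ≤ p₁) (hp₂ : 1 ≤ p₂) (hr₁ : 1 ≤ r₁)
    (hpp : 1 / p = 1 / p₁ + 1 / p₂) (hpr : 1 / p = 1 / r₁ + 1 / r₂)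
    (f g : SchwartzMap (Rn n) ℝ) :
    besovNorm ψ₀ Ψ s p q (fun x => f x * g x) ≤
      ((∫⁻ x, ‖Ψ x‖ₑ) * (1 + ∑' j, wt (-s) j) +
        3 * (((∫⁻ x, ‖ψ₀ x‖ₑ) * (∫⁻ x, ‖Ψ x‖ₑ)) * wt s 2 * ∑' j, wt (-s) j)) *
      (eLpNorm (fun x => f x) p₁ volume * besovNorm ψ₀ Ψ s p₂ q (fun x => g x) +
           eLpNorm (fun x => g x) r₁ volume * besovNorm ψ₀ Ψ s r₂ q (fun x => f x)) := by
  have hB := lp_le_besov (s := s) hψ hΨ hp₂ hq g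
  rw [besov_eq _ _ _ _ _ (fun x => f x * g x)]
  set A := (∫⁻ x, ‖ψ₀ x‖ₑ) * (∫⁻ x, ‖Ψ x‖ₑ)
  set N1 := ∫⁻ x, ‖Ψ x‖ₑ
  set W := ∑' j, wt (-s) j
  set Bg := besovNorm ψ₀ Ψ s p₂ q (fun x => g x) with hBg
  set Bf := besovNorm ψ₀ Ψ s r₂ q (fun x => f x) with hBf
  set Nf := eLpNorm (fun x => f x) p₁ volume
  set Ng := eLpNorm (fun x => g x) r₁ volume
  have low : eLpNorm (lpProj Ψ 0 (fun x => f x * g x)) p volume ≤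
      N1 * (1 + W) * (Nf * Bg + Ng * Bf) := by
    have h1 := piece_bound (ψ₀ := Ψ) hp hpp (CB_schwartz f) (CB_schwartz g) 0 le_rfl hB
    refine h1.trans ?_
    calc _ = N1 * (1 + W) * (Nf * Bg) := by simp only [N1, Nf]; ring
      _ ≤ _ := mul_le_mul_right le_self_add _
  set M := Nf * eLpNorm (lpProj Ψ 0 (fun x => g x)) p₂ volume with hM
  set a : ℕ → ℝ≥0∞ := fun j => Ng * eLpNorm (lpProj ψ₀ (j:ℤ) (fun x => f x)) r₂ volume +
            Nf * eLpNorm (lpProj ψ₀ (j:ℤ) (fun x => g x)) p₂ volume with ha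
  have D : ∀ k : ℕ, eLpNorm (lpProj ψ₀ (k:ℤ) (fun x => f x * g x)) p volume ≤
      A * ∑' i, shift2 M a (k + i) := by
    intro k
    refine fatou_aux (F := fun J : ℕ => lpProj ψ₀ (k:ℤ) (fun y => lpProj Ψ (J:ℤ) (fun x => f x) y *
      lpProj Ψ (J:ℤ) (fun x => g x) y))
      (fun J => lpProj_aesm _ _ (CB_mul (CB_lpProj _ _ _) (CB_lpProj _ _ _)))
      (lpProj_mul_tendsto hψ hΨ f g k) (fun J => ?_)
    exact (main_bound hψ hΨ hp hp₁ hr₁ hpp hpr f g k J).trans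
      (mul_le_mul_right (tail_sum _ _ _) _)
  have E : ∀ k : ℕ, wt s k * eLpNorm (lpProj ψ₀ (k:ℤ) (fun x => f x * g x)) p volume ≤
      (A * wt s 2) * ∑' i, wt (-s) i * shift2 M (fun j => wt s j * a j) (k + i) := by
    intro k
    refine (mul_le_mul_right (D k) _).trans ?_
    calc wt s k * (A * ∑' i, shift2 M a (k + i))
        = A * ∑' i, wt (-s) i * (wt s (k + i) * shift2 M a (k + i)) := by
          rw [mul_left_comm, ← ENNReal.tsum_mul_left]
          congr 2
          ext i
          rw [wt_add, ← mul_assoc (wt (-s) i), mul_left_comm (wt (-s) i), wt_neg_mul, mul_one]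
      _ ≤ A * ∑' i, wt (-s) i * (wt s 2 * shift2 M (fun j => wt s j * a j) (k + i)) :=
          mul_le_mul_right (ENNReal.tsum_le_tsum fun i => mul_le_mul_right (wt_shift hs _ _ _) _) _
      _ = _ := by
          rw [mul_assoc A (wt s 2), ← ENNReal.tsum_mul_left (a := wt s 2)]
          congr 2
          ext i
          rw [mul_left_comm]
  have hb : lq q (fun j => wt s j * a j) ≤ Ng * Bf + Nf * Bg := by
    have e : (fun j => wt s j * a j) = fun j =>
        Ng * (wt s j * eLpNorm (lpProj ψ₀ (j:ℤ) (fun x => f x)) r₂ volume) +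
        Nf * (wt s j * eLpNorm (lpProj ψ₀ (j:ℤ) (fun x => g x)) p₂ volume) := by
      ext j
      simp only [ha]
      ring
    rw [e]
    refine (lq_add_le hq _ _).trans ?_
    rw [lq_const_mul hq, lq_const_mul hq, hBf, hBg, besov_eq, besov_eq]
    exact add_le_add (mul_le_mul_right le_add_self _) (mul_le_mul_right le_add_self _)
  have hM' : M ≤ Nf * Bg + Ng * Bf := by
    refine le_trans (mul_le_mul_right ?_ _) le_self_add
    rw [hBg, besov_eq]
    exact le_self_add
  have high : lq q (fun k => wt s k * eLpNorm (lpProj ψ₀ (k:ℤ) (fun x => f x * g x)) p volume) ≤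
      3 * (A * wt s 2 * W) * (Nf * Bg + Ng * Bf) := by
    refine (lq_mono E).trans ?_
    rw [lq_const_mul hq]
    refine (mul_le_mul_right (lq_conv hq _ _) _).trans ?_
    refine (mul_le_mul_right (mul_le_mul_right (lq_shift2 hq _ _) _) _).trans ?_
    calc _ ≤ A * wt s 2 * (W * (2 * (Nf * Bg + Ng * Bf) + (Nf * Bg + Ng * Bf))) := by
          refine mul_le_mul_right (mul_le_mul_right (add_le_add (mul_le_mul_right hM' _) ?_) _) _
          rw [add_comm (Nf * Bg)]; exact hb
      _ = _ := by ring
  rw [add_mul]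
  exact add_le_add low high

/-- Fractional Leibniz rule in Besov spaces: for `s > 0`, `q ∈ [1,∞]` and
`p, p₁, p₂, r₁, r₂ ∈ [1,∞]` with `1/p = 1/p₁ + 1/p₂ = 1/r₁ + 1/r₂` and `p < ∞`,
`‖fg‖_{B^s_{p,q}} ≤ C (‖f‖_{L^{p₁}} ‖g‖_{B^s_{p₂,q}} + ‖g‖_{L^{r₁}} ‖f‖_{B^s_{r₂,q}})`. -/
theorem besov_fractional_leibniz
    (n : ℕ) (hn : 1 ≤ n) (ψ₀ Ψ : SchwartzMap (Rn n) ℝ)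
    (hψ : IsLPF n ψ₀) (hΨ : IsLowPiece ψ₀ Ψ)
    (s : ℝ) (hs : 0 < s) (q : ℝ≥0∞) (hq : 1 ≤ q)
    (p p₁ p₂ r₁ r₂ : ℝ≥0∞) (hp : 1 ≤ p) (hpfin : p < ∞)
    (hp₁ : 1 ≤ p₁) (hp₂ : 1 ≤ p₂) (hr₁ : 1 ≤ r₁) (hr₂ : 1 ≤ r₂)
    (hpp : 1 / p = 1 / p₁ + 1 / p₂) (hpr : 1 / p = 1 / r₁ + 1 / r₂) :
    ∃ C : ℝ, 0 < C ∧ ∀ f g : SchwartzMap (Rn n) ℝ,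
      besovNorm ψ₀ Ψ s p q (fun x => f x * g x)
        ≤ ENNReal.ofReal C *
          (eLpNorm (fun x => f x) p₁ volume * besovNorm ψ₀ Ψ s p₂ q (fun x => g x) +
           eLpNorm (fun x => g x) r₁ volume * besovNorm ψ₀ Ψ s r₂ q (fun x => f x)) := by
  set C0 : ℝ≥0∞ := (∫⁻ x, ‖Ψ x‖ₑ) * (1 + ∑' j, wt (-s) j) +
        3 * (((∫⁻ x, ‖ψ₀ x‖ₑ) * (∫⁻ x, ‖Ψ x‖ₑ)) * wt s 2 * ∑' j, wt (-s) j) with hC0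
  have h1 : (∫⁻ x, ‖Ψ x‖ₑ) ≠ ∞ := (Ψ.integrable (μ := volume)).2.ne
  have h2 : (∫⁻ x, ‖ψ₀ x‖ₑ) ≠ ∞ := (ψ₀.integrable (μ := volume)).2.ne
  have h3 := wt_sum hs
  have hfin : C0 ≠ ∞ := by
    refine ENNReal.add_ne_top.2 ⟨ENNReal.mul_ne_top h1 (ENNReal.add_ne_top.2 ⟨by simp, h3⟩), ?_⟩
    refine ENNReal.mul_ne_top (by simp) (ENNReal.mul_ne_top (ENNReal.mul_ne_top
      (ENNReal.mul_ne_top h2 h1) ?_) h3)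
    exact ENNReal.ofReal_ne_top
  refine ⟨C0.toReal + 1, by positivity, fun f g => ?_⟩
  refine (besov_leibniz_aux hψ hΨ hs hq hp hp₁ hp₂ hr₁ hpp hpr f g).trans ?_
  refine mul_le_mul_left ?_ _
  rw [← hC0]
  calc C0 = ENNReal.ofReal C0.toReal := (ENNReal.ofReal_toReal hfin).symm
    _ ≤ _ := ENNReal.ofReal_le_ofReal (by linarith)
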